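/- Let G ≅ C_m ⋉_φ C_{mn} for positive integers m, n. Then s_{mnℕ}(G) = m + 2mn − 2; that is, every sequence over G of length at least m + 2mn − 2 contains a nonempty product-one subsequence of length divisible by mn, and there exists a sequence of length m + 2mn − 3 with no such subsequence. -/

import Mathlib

/-- A sequence (multiset) over `G` is product-one if its terms can be ordered so
that their product equals `1`. -/
def IsProductOne {G : Type*} [Group G] (S : Multiset G) : Prop :=
  ∃ l : List G, (l : Multiset G) = S ∧ l.prod = 1

universe u

section PolyMethod
variable {ι R : Type*} [DecidableEq ι] [CommRing R]

/-- `f`, as a function on subsets of `J`, behaves like a polynomial of degree at most `d`. -/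
def LowDeg (J : Finset ι) (d : ℕ) (f : Finset ι → R) : Prop :=
  ∀ K ⊆ J, K.card + d < J.card → ∑ I ∈ Finset.Icc K J, (-1 : R) ^ I.card * f I = 0

lemma LowDeg.congr {J : Finset ι} {d : ℕ} {f g : Finset ι → R} (hf : LowDeg J d f)
    (h : ∀ I ⊆ J, f I = g I) : LowDeg J d g := by
  intro K hK hc
  rw [← hf K hK hc]
  refine Finset.sum_congr rfl fun I hI => ?_
  rw [h I (Finset.mem_Icc.1 hI).2]

lemma LowDeg.mono {J : Finset ι} {d e : ℕ} {f : Finset ι → R} (hf : LowDeg J d f)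
    (h : d ≤ e) : LowDeg J e f := fun K hK hc => hf K hK (by omega)

lemma LowDeg.add {J : Finset ι} {d : ℕ} {f g : Finset ι → R} (hf : LowDeg J d f)
    (hg : LowDeg J d g) : LowDeg J d (fun I => f I + g I) := by
  intro K hK hc
  simp only [mul_add, Finset.sum_add_distrib]
  rw [hf K hK hc, hg K hK hc, add_zero]

lemma LowDeg.smul {J : Finset ι} {d : ℕ} {f : Finset ι → R} (hf : LowDeg J d f) (c : R) :
    LowDeg J d (fun I => c * f I) := by
  intro K hK hc
  have := hf K hK hc
  rw [← mul_zero c, ← this, Finset.mul_sum]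
  exact Finset.sum_congr rfl fun I _ => by ring

lemma LowDeg.sum {κ : Type*} {J : Finset ι} {d : ℕ} (s : Finset κ) {f : κ → Finset ι → R}
    (hf : ∀ k ∈ s, LowDeg J d (f k)) : LowDeg J d (fun I => ∑ k ∈ s, f k I) := by
  intro K hK hc
  simp only [Finset.mul_sum]
  rw [Finset.sum_comm]
  exact Finset.sum_eq_zero fun k hk => hf k hk K hK hc

lemma LowDeg.one (J : Finset ι) : LowDeg J 0 (fun _ => (1 : R)) := by
  intro K hK hc
  obtain ⟨a, haJ, haK⟩ : ∃ a ∈ J, a ∉ K := by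
    by_contra! h
    have := Finset.card_le_card (show J ⊆ K from h)
    omega
  refine Finset.sum_involution (fun I _ => if a ∈ I then I.erase a else insert a I) ?_ ?_ ?_ ?_
  · intro I hI
    by_cases h : a ∈ I
    · have h2 := Finset.card_erase_add_one h
      simp only [h, if_true, mul_one]
      rw [← h2, pow_succ]; ring
    · simp only [h, if_false, mul_one, Finset.card_insert_of_notMem h, pow_succ]; ring
  · intro I hI _ h
    by_cases h' : a ∈ I
    · simp only [h', if_true] at h
      rw [← h] at h'; simp at h'
    · simp only [h', if_false] at h
      rw [← h] at h'; simp at h'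
  · intro I hI
    simp only [Finset.mem_Icc] at hI ⊢
    split_ifs with h
    · exact ⟨fun x hx => Finset.mem_erase.2 ⟨fun e => haK (e ▸ hx), hI.1 hx⟩,
        (Finset.erase_subset _ _).trans hI.2⟩
    · exact ⟨hI.1.trans (Finset.subset_insert _ _), Finset.insert_subset haJ hI.2⟩
  · intro I hI
    by_cases h : a ∈ I
    · simp [h, Finset.insert_erase]
    · simp [h]

lemma LowDeg.ind {J P : Finset ι} {d : ℕ} {f : Finset ι → R} (hf : LowDeg J d f) (hP : P ⊆ J) :
    LowDeg J (d + P.card) (fun I => if P ⊆ I then f I else 0) := by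
  intro K hK hc
  have h1 := hf (K ∪ P) (Finset.union_subset hK hP)
    (by have := Finset.card_union_le K P; omega)
  refine Eq.trans ?_ h1
  simp only [mul_ite, mul_zero]
  rw [← Finset.sum_filter]
  refine Finset.sum_congr ?_ fun _ _ => rfl
  ext I
  simp only [Finset.mem_filter, Finset.mem_Icc, Finset.union_subset_iff]
  tauto

lemma LowDeg.lin {J : Finset ι} {d : ℕ} {f : Finset ι → R} (hf : LowDeg J d f) (c : ι → R)
    (t : R) : LowDeg J (d + 1) (fun I => (∑ i ∈ I, c i + t) * f I) := by
  have h1 : LowDeg J (d + 1) (fun I => ∑ i ∈ J, c i * (if {i} ⊆ I then f I else 0)) := by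
    refine LowDeg.sum _ fun i hi => LowDeg.smul ?_ _
    simpa using hf.ind (P := {i}) (by simpa using hi)
  refine (h1.add ((hf.smul t).mono (Nat.le_succ d))).congr fun I hI => ?_
  rw [add_mul, Finset.sum_mul]
  congr 1
  simp only [Finset.singleton_subset_iff, mul_ite, mul_zero]
  rw [← Finset.sum_filter, Finset.filter_mem_eq_inter, Finset.inter_eq_right.2 hI]

lemma LowDeg.lin_pow {J : Finset ι} {d : ℕ} {f : Finset ι → R} (hf : LowDeg J d f) (c : ι → R)
    (t : R) (k : ℕ) : LowDeg J (d + k) (fun I => (∑ i ∈ I, c i + t) ^ k * f I) := by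
  induction k with
  | zero => simpa using hf
  | succ k ih =>
    refine (ih.lin c t).congr fun I _ => ?_
    ring

lemma LowDeg.choose {J : Finset ι} {d : ℕ} {f : Finset ι → R} (hf : LowDeg J d f) (k : ℕ) :
    LowDeg J (d + k) (fun I => (I.card.choose k : R) * f I) := by
  have h1 : LowDeg J (d + k)
      (fun I => ∑ P ∈ J.powersetCard k, (if P ⊆ I then f I else 0)) := by
    refine LowDeg.sum _ fun P hP => ?_
    rw [Finset.mem_powersetCard] at hP
    have := hf.ind hP.1
    rwa [hP.2] at this
  refine h1.congr fun I hI => ?_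
  rw [← Finset.sum_filter, Finset.sum_const, nsmul_eq_mul]
  congr 2
  rw [← Finset.card_powersetCard]
  congr 1
  ext P
  simp only [Finset.mem_filter, Finset.mem_powersetCard]
  constructor
  · tauto
  · exact fun h => ⟨⟨h.1.trans hI, h.2⟩, h.1⟩

lemma LowDeg.total {J : Finset ι} {d : ℕ} {f : Finset ι → R} (hf : LowDeg J d f)
    (h : d < J.card) : ∑ I ∈ J.powerset, (-1 : R) ^ I.card * f I = 0 := by
  have := hf ∅ (by simp) (by simpa using h)
  rwa [show Finset.Icc (∅ : Finset ι) J = J.powerset by ext; simp] at this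

end PolyMethod

section Prime
variable {ι : Type*} [DecidableEq ι] {p : ℕ} [Fact p.Prime]

lemma zmod_ind (a : ZMod p) : 1 - a ^ (p - 1) = if a = 0 then 1 else 0 := by
  have hp := (Fact.out : p.Prime).two_le
  split_ifs with h
  · rw [h, zero_pow (by omega), sub_zero]
  · rw [ZMod.pow_card_sub_one_eq_one h, sub_self]

lemma LowDeg.zind {J : Finset ι} {d : ℕ} {f : Finset ι → ZMod p} (hf : LowDeg J d f)
    (c : ι → ZMod p) (t : ZMod p := 0) :
    LowDeg J (d + (p - 1)) (fun I => (if ∑ i ∈ I, c i + t = 0 then 1 else 0) * f I) := by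
  refine ((hf.mono (Nat.le_add_right d (p - 1))).add ((hf.lin_pow c t (p - 1)).smul (-1))).congr
    fun I _ => ?_
  rw [← zmod_ind]; ring

/-- difference of two indicators has degree `p - 2`. -/
lemma LowDeg.zind2 {J : Finset ι} {d : ℕ} {f : Finset ι → ZMod p} (hf : LowDeg J d f)
    (c : ι → ZMod p) :
    LowDeg J (d + (p - 2)) (fun I => ((if ∑ i ∈ I, c i = 0 then 1 else 0)
      - (if ∑ i ∈ I, c i + 1 = 0 then 1 else 0)) * f I) := by
  have h1 : LowDeg J (d + (p - 2)) (fun I => ∑ k ∈ Finset.range (p - 1),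
      (∑ i ∈ I, c i + 1) ^ k * ((∑ i ∈ I, c i + 0) ^ (p - 1 - 1 - k) * f I)) := by
    refine LowDeg.sum _ fun k hk => ?_
    rw [Finset.mem_range] at hk
    exact ((hf.lin_pow c 0 (p - 1 - 1 - k)).lin_pow c 1 k).mono (by omega)
  refine h1.congr fun I _ => ?_
  rw [← zmod_ind, ← zmod_ind]
  have := (Commute.all (∑ i ∈ I, c i + 1) (∑ i ∈ I, c i)).geom_sum₂_mul (p - 1)
  simp only [add_zero, ← mul_assoc, ← Finset.sum_mul]
  rw [add_sub_cancel_left, mul_one] at this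
  rw [this]; ring

lemma exists_zero_sum_of_lowDeg {J : Finset ι} {d : ℕ} {P : Finset ι → Prop} [DecidablePred P]
    (hf : LowDeg J d (fun I => if P I then (1 : ZMod p) else 0)) (h : d < J.card) (h0 : P ∅) :
    ∃ I ⊆ J, I.Nonempty ∧ P I := by
  by_contra! hc
  have h1 := hf.total h
  rw [Finset.sum_eq_single ∅] at h1
  · simp [h0] at h1
  · intro I hI hne
    rw [if_neg, mul_zero]
    exact hc I (Finset.mem_powerset.1 hI) (Finset.nonempty_iff_ne_empty.2 hne)
  · simp

lemma dav2 {J : Finset ι} (u w : ι → ZMod p) (h : 2 * p - 1 ≤ J.card) :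
    ∃ I ⊆ J, I.Nonempty ∧ ∑ i ∈ I, u i = 0 ∧ ∑ i ∈ I, w i = 0 := by
  have hp := (Fact.out : p.Prime).two_le
  have h1 := ((LowDeg.one (R := ZMod p) J).zind u).zind w
  refine exists_zero_sum_of_lowDeg (p := p) (d := 2 * (p - 1))
    (P := fun I => ∑ i ∈ I, u i = 0 ∧ ∑ i ∈ I, w i = 0)
    ((h1.mono (by omega)).congr fun I _ => ?_) (by omega) (by simp)
  split_ifs <;> simp_all

lemma dav3 {J : Finset ι} (u v w : ι → ZMod p) (h : 3 * p - 2 ≤ J.card) :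
    ∃ I ⊆ J, I.Nonempty ∧ (∑ i ∈ I, u i = 0 ∧ ∑ i ∈ I, v i = 0) ∧ ∑ i ∈ I, w i = 0 := by
  have hp := (Fact.out : p.Prime).two_le
  have h1 := (((LowDeg.one (R := ZMod p) J).zind u).zind v).zind w
  refine exists_zero_sum_of_lowDeg (p := p) (d := 3 * (p - 1))
    (P := fun I => (∑ i ∈ I, u i = 0 ∧ ∑ i ∈ I, v i = 0) ∧ ∑ i ∈ I, w i = 0)
    ((h1.mono (by omega)).congr fun I _ => ?_) (by omega) (by simp)
  split_ifs <;> simp_all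

/-- zero-sum subsets of size `k`. -/
def zsub (u v : ι → ZMod p) (J : Finset ι) (k : ℕ) : Finset (Finset ι) :=
  (J.powersetCard k).filter (fun I => ∑ i ∈ I, u i = 0 ∧ ∑ i ∈ I, v i = 0)

lemma mem_zsub {u v : ι → ZMod p} {J I : Finset ι} {k : ℕ} :
    I ∈ zsub u v J k ↔ (I ⊆ J ∧ I.card = k) ∧ ∑ i ∈ I, u i = 0 ∧ ∑ i ∈ I, v i = 0 := by
  simp [zsub, Finset.mem_powersetCard]

lemma zsub_zero (u v : ι → ZMod p) (J : Finset ι) : (zsub u v J 0).card = 1 := by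
  rw [Finset.card_eq_one]
  refine ⟨∅, ?_⟩
  ext I
  simp only [mem_zsub, Finset.card_eq_zero, Finset.mem_singleton]
  constructor
  · tauto
  · rintro rfl; simp

lemma lowDeg_zs (u v : ι → ZMod p) (J : Finset ι) : LowDeg J (2 * (p - 1))
    (fun I => (if ∑ i ∈ I, u i = 0 ∧ ∑ i ∈ I, v i = 0 then (1 : ZMod p) else 0)) := by
  refine ((((LowDeg.one (R := ZMod p) J).zind u).zind v).mono (by omega)).congr fun I _ => ?_
  split_ifs <;> simp_all

lemma count_id (u v : ι → ZMod p) {J : Finset ι} {d : ℕ} (h : ℕ → ZMod p) (s : Finset ℕ)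
    (hf : LowDeg J d (fun I => h I.card *
      (if ∑ i ∈ I, u i = 0 ∧ ∑ i ∈ I, v i = 0 then (1 : ZMod p) else 0))) (hd : d < J.card)
    (hs : ∀ k ≤ J.card, k ∉ s → h k = 0) :
    ∑ k ∈ s, (-1) ^ k * h k * ((zsub u v J k).card : ZMod p) = 0 := by
  have h1 := hf.total hd
  rw [Finset.sum_powerset] at h1
  have h2 : ∀ k, ∑ I ∈ J.powersetCard k, (-1 : ZMod p) ^ I.card * (h I.card *
      (if ∑ i ∈ I, u i = 0 ∧ ∑ i ∈ I, v i = 0 then (1 : ZMod p) else 0))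
      = (-1) ^ k * h k * ((zsub u v J k).card : ZMod p) := by
    intro k
    rw [zsub, Finset.card_filter, Nat.cast_sum, Finset.mul_sum]
    refine Finset.sum_congr rfl fun I hI => ?_
    rw [(Finset.mem_powersetCard.1 hI).2]
    push_cast
    ring
  simp only [h2] at h1
  rw [← h1]
  have h3 : ∀ k, J.card < k → (zsub u v J k).card = 0 := by
    intro k hk
    rw [Finset.card_eq_zero, Finset.eq_empty_iff_forall_notMem]
    intro I hI
    have := mem_zsub.1 hI
    have h4 := Finset.card_le_card this.1.1
    omega
  rw [← Finset.sum_filter_add_sum_filter_not s (fun k => k ≤ J.card)]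
  rw [Finset.sum_eq_zero (s := s.filter (fun k => ¬ k ≤ J.card)), add_zero]
  · refine Finset.sum_subset ?_ ?_
    · intro k hk
      simp only [Finset.mem_filter, Finset.mem_range] at hk ⊢
      omega
    · intro k hk hk'
      simp only [Finset.mem_filter, Finset.mem_range] at hk hk'
      rw [hs k (by omega) (fun h => hk' ⟨h, by omega⟩)]
      ring
  · intro k hk
    rw [h3 k (by simpa using (Finset.mem_filter.1 hk).2)]
    simp

lemma mult_cases {p k : ℕ} (hk : k < 4 * p) (h : p ∣ k) :
    k = 0 ∨ k = p ∨ k = 2 * p ∨ k = 3 * p := by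
  obtain ⟨q, rfl⟩ := h
  have : q < 4 := by
    by_contra hq
    have := Nat.mul_le_mul_left p (not_lt.1 hq)
    omega
  interval_cases q <;> omega

lemma mult_cases' {p k : ℕ} (hk : k + 1 < 4 * p) (h : p ∣ k + 1) :
    k = p - 1 ∨ k = 2 * p - 1 ∨ k = 3 * p - 1 := by
  have := mult_cases hk h
  omega

lemma card_eq_sum (I : Finset ι) : (I.card : ZMod p) = ∑ _i ∈ I, (1 : ZMod p) := by simp

lemma choose_p (k : ℕ) : (k.choose p : ZMod p) = (k / p : ℕ) := by
  have hp := (Fact.out : p.Prime).pos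
  have := Choose.choose_modEq_choose_mod_mul_choose_div_nat (p := p) (n := k) (k := p)
  rw [Nat.mod_self, Nat.div_self hp, Nat.choose_zero_right, one_mul, Nat.choose_one_right] at this
  exact (ZMod.natCast_eq_natCast_iff _ _ _).2 this

lemma L2 (hp2 : p ≠ 2) (u v : ι → ZMod p) {J : Finset ι} (h1 : 3 * p - 2 ≤ J.card)
    (h2 : J.card < 3 * p) :
    1 - ((zsub u v J p).card : ZMod p) + ((zsub u v J (2 * p)).card : ZMod p) = 0 := by
  have hp := (Fact.out : p.Prime).two_le
  have hodd := (Fact.out : p.Prime).odd_of_ne_two hp2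
  have := count_id u v (J := J) (d := 3 * (p - 1)) (fun k => if (k : ZMod p) = 0 then 1 else 0)
    {0, p, 2 * p} ?_ (by omega) ?_
  · rw [Finset.sum_insert, Finset.sum_insert, Finset.sum_singleton] at this
    · simp [zsub_zero, hodd.neg_one_pow, pow_mul] at this
      linear_combination this
    · simp; omega
    · simp; omega
  · refine (((lowDeg_zs u v J).zind (fun _ => 1)).mono (by omega)).congr fun I _ => ?_
    rw [card_eq_sum, add_zero]
  · intro k hk hks
    simp only [Finset.mem_insert, Finset.mem_singleton, ZMod.natCast_eq_zero_iff] at hks ⊢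
    rw [if_neg]
    intro h
    have := mult_cases (by omega) h
    omega

lemma L3a (hp2 : p ≠ 2) (u v : ι → ZMod p) {J : Finset ι} (h1 : J.card = 4 * p - 3) :
    1 - ((zsub u v J p).card : ZMod p) + ((zsub u v J (2 * p)).card : ZMod p)
      - ((zsub u v J (3 * p)).card : ZMod p) = 0 := by
  have hp := (Fact.out : p.Prime).two_le
  have hodd := (Fact.out : p.Prime).odd_of_ne_two hp2
  have := count_id u v (J := J) (d := 3 * (p - 1)) (fun k => if (k : ZMod p) = 0 then 1 else 0)
    {0, p, 2 * p, 3 * p} ?_ (by omega) ?_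
  · rw [Finset.sum_insert, Finset.sum_insert, Finset.sum_insert, Finset.sum_singleton] at this
    · simp [zsub_zero, hodd.neg_one_pow, pow_mul, (show Odd 3 by decide).neg_one_pow] at this
      linear_combination this
    · simp; omega
    · simp; omega
    · simp; omega
  · refine (((lowDeg_zs u v J).zind (fun _ => 1)).mono (by omega)).congr fun I _ => ?_
    rw [card_eq_sum, add_zero]
  · intro k hk hks
    simp only [Finset.mem_insert, Finset.mem_singleton, ZMod.natCast_eq_zero_iff] at hks ⊢
    rw [if_neg]
    intro h
    have := mult_cases (by omega) h
    omega

lemma signs (hp2 : p ≠ 2) : (-1 : ZMod p) ^ (p - 1) = 1 ∧ (-1 : ZMod p) ^ (2 * p - 1) = -1 ∧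
    (-1 : ZMod p) ^ (3 * p - 1) = 1 ∧ (-1 : ZMod p) ^ p = -1 ∧ (-1 : ZMod p) ^ (2 * p) = 1 ∧
    (-1 : ZMod p) ^ (3 * p) = -1 := by
  have hp := (Fact.out : p.Prime).two_le
  obtain ⟨k, hk⟩ := (Fact.out : p.Prime).odd_of_ne_two hp2
  refine ⟨Even.neg_one_pow ⟨k, by omega⟩, Odd.neg_one_pow ⟨2 * k, by omega⟩,
    Even.neg_one_pow ⟨3 * k + 1, by omega⟩, Odd.neg_one_pow ⟨k, by omega⟩,
    Even.neg_one_pow ⟨2 * k + 1, by omega⟩, Odd.neg_one_pow ⟨3 * k + 1, by omega⟩⟩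

lemma cast_pred (q : ℕ) (hq : 0 < q) : ((q * p - 1 : ℕ) : ZMod p) + 1 = 0 := by
  have hp := (Fact.out : p.Prime).two_le
  have h : 1 ≤ q * p := Nat.mul_pos hq (by omega)
  rw [Nat.cast_sub h]
  simp

lemma cast_pred' (q : ℕ) (hq : 0 < q) : ((q * p - 1 : ℕ) : ZMod p) ≠ 0 := by
  intro h
  have := cast_pred (p := p) q hq
  rw [h] at this
  simp at this

lemma L3b (hp2 : p ≠ 2) (u v : ι → ZMod p) {J : Finset ι} (h1 : J.card = 4 * p - 3) :
    ((zsub u v J (p - 1)).card : ZMod p) - ((zsub u v J (2 * p - 1)).card : ZMod p)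
      + ((zsub u v J (3 * p - 1)).card : ZMod p) = 0 := by
  have hp := (Fact.out : p.Prime).two_le
  obtain ⟨s1, s2, s3, s4, s5, s6⟩ := signs hp2
  have := count_id u v (J := J) (d := 3 * (p - 1))
    (fun k => if (k : ZMod p) + 1 = 0 then 1 else 0)
    {p - 1, 2 * p - 1, 3 * p - 1} ?_ (by omega) ?_
  · rw [Finset.sum_insert, Finset.sum_insert, Finset.sum_singleton] at this
    · have e1 := cast_pred (p := p) 1 (by omega)
      rw [one_mul] at e1
      rw [s1, s2, s3, if_pos e1, if_pos (cast_pred 2 (by omega)),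
        if_pos (cast_pred 3 (by omega))] at this
      linear_combination this
    · simp; omega
    · simp; omega
  · refine (((lowDeg_zs u v J).zind (fun _ => 1) 1).mono (by omega)).congr fun I _ => ?_
    rw [card_eq_sum]
  · intro k hk hks
    simp only [Finset.mem_insert, Finset.mem_singleton] at hks ⊢
    rw [if_neg]
    intro h
    rw [← Nat.cast_succ, ZMod.natCast_eq_zero_iff] at h
    have := mult_cases' (by omega) h
    omega

lemma L4 (hp2 : p ≠ 2) (u v : ι → ZMod p) {J : Finset ι} (h1 : J.card = 4 * p - 3) :
    - ((zsub u v J p).card : ZMod p) + 2 * ((zsub u v J (2 * p)).card : ZMod p)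
      - 3 * ((zsub u v J (3 * p)).card : ZMod p)
      + ((zsub u v J (2 * p - 1)).card : ZMod p)
      - 2 * ((zsub u v J (3 * p - 1)).card : ZMod p) = 0 := by
  have hp := (Fact.out : p.Prime).two_le
  have hp3 : 3 ≤ p := by omega
  obtain ⟨s1, s2, s3, s4, s5, s6⟩ := signs hp2
  have := count_id u v (J := J) (d := 4 * p - 4)
    (fun k => (k.choose p : ZMod p) * ((if (k : ZMod p) = 0 then 1 else 0)
      - (if (k : ZMod p) + 1 = 0 then 1 else 0)))
    {0, p, 2 * p, 3 * p, p - 1, 2 * p - 1, 3 * p - 1} ?_ (by omega) ?_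
  · have d1 : (2 * p - 1) / p = 1 := Nat.div_eq_of_lt_le (by omega) (by omega)
    have d2 : (3 * p - 1) / p = 2 := Nat.div_eq_of_lt_le (by omega) (by omega)
    have d3 : (p - 1) / p = 0 := Nat.div_eq_of_lt (by omega)
    have d4 : p / p = 1 := Nat.div_self (by omega)
    have d5 : 2 * p / p = 2 := Nat.mul_div_left 2 (by omega)
    have d6 : 3 * p / p = 3 := Nat.mul_div_left 3 (by omega)
    have d7 : 0 / p = 0 := Nat.zero_div p
    have c2 := cast_pred (p := p) 2 (by omega)
    have c3 := cast_pred (p := p) 3 (by omega)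
    have c2' := cast_pred' (p := p) 2 (by omega)
    have c3' := cast_pred' (p := p) 3 (by omega)
    simp only [choose_p] at this
    rw [Finset.sum_insert, Finset.sum_insert, Finset.sum_insert, Finset.sum_insert,
      Finset.sum_insert, Finset.sum_insert, Finset.sum_singleton] at this
    · rw [d1, d2, d3, d4, d5, d6, d7, s1, s2, s3, s4, s5, s6, if_pos c2, if_pos c3, if_neg c2',
        if_neg c3'] at this
      simp at this
      linear_combination this
    all_goals simp; omega
  · refine ((((lowDeg_zs u v J).zind2 (fun _ => 1)).choose p).mono (by omega)).congr fun I _ => ?_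
    rw [card_eq_sum, mul_assoc]
  · intro k hk hks
    simp only [Finset.mem_insert, Finset.mem_singleton] at hks ⊢
    rw [if_neg, if_neg, sub_zero, mul_zero]
    · intro h
      rw [← Nat.cast_succ, ZMod.natCast_eq_zero_iff] at h
      have := mult_cases' (by omega) h
      omega
    · intro h
      rw [ZMod.natCast_eq_zero_iff] at h
      have := mult_cases (by omega) h
      omega

lemma sum_sdiff_zero {u : ι → ZMod p} {A D : Finset ι} (h : A ⊆ D) (h1 : ∑ i ∈ A, u i = 0)
    (h2 : ∑ i ∈ D, u i = 0) : ∑ i ∈ D \ A, u i = 0 := by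
  have := Finset.sum_sdiff h (f := u)
  rwa [h1, h2, add_zero] at this

lemma zsub_p_mono {u v : ι → ZMod p} {X D : Finset ι} {k : ℕ} (h : (zsub u v X k).card = 0)
    (hD : D ⊆ X) : (zsub u v D k).card = 0 := by
  rw [Finset.card_eq_zero] at h ⊢
  rw [Finset.eq_empty_iff_forall_notMem] at h ⊢
  intro I hI
  rw [mem_zsub] at hI
  exact h I (mem_zsub.2 ⟨⟨hI.1.1.trans hD, hI.1.2⟩, hI.2⟩)

lemma L5 (hp2 : p ≠ 2) {u v : ι → ZMod p} {X : Finset ι} (h : (zsub u v X p).card = 0) :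
    (zsub u v X (3 * p)).card = 0 := by
  have hp := (Fact.out : p.Prime).two_le
  by_contra hne
  obtain ⟨D, hD⟩ := Finset.card_ne_zero.1 hne
  obtain ⟨⟨hDX, hDc⟩, hD1, hD2⟩ := mem_zsub.1 hD
  obtain ⟨x, hx⟩ := Finset.card_pos.1 (show 0 < D.card by omega)
  have hc : (D.erase x).card = 3 * p - 1 := by rw [Finset.card_erase_of_mem hx, hDc]
  have h2 := L2 hp2 u v (J := D.erase x) (by omega) (by omega)
  rw [zsub_p_mono h ((Finset.erase_subset x D).trans hDX)] at h2
  have h3 : (zsub u v (D.erase x) (2 * p)).card ≠ 0 := by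
    intro h0
    rw [h0] at h2
    simp at h2
  obtain ⟨C, hC⟩ := Finset.card_ne_zero.1 h3
  obtain ⟨⟨hCX, hCc⟩, hC1, hC2⟩ := mem_zsub.1 hC
  have hCD := hCX.trans (Finset.erase_subset x D)
  rw [Finset.card_eq_zero, Finset.eq_empty_iff_forall_notMem] at h
  refine h (D \ C) (mem_zsub.2 ⟨⟨Finset.sdiff_subset.trans hDX, ?_⟩, sum_sdiff_zero hCD hC1 hD1,
    sum_sdiff_zero hCD hC2 hD2⟩)
  rw [Finset.card_sdiff_of_subset hCD]
  omega

lemma L6a (u v : ι → ZMod p) (X : Finset ι) :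
    ∑ A ∈ zsub u v X (p - 1), (zsub u v (X \ A) (2 * p)).card
      = ∑ D ∈ zsub u v X (3 * p - 1), (zsub u v D (2 * p)).card := by
  have hp := (Fact.out : p.Prime).two_le
  rw [← Finset.card_sigma, ← Finset.card_sigma]
  refine Finset.card_nbij' (fun q => ⟨q.1 ∪ q.2, q.2⟩) (fun q => ⟨q.1 \ q.2, q.2⟩) ?_ ?_ ?_ ?_
  · rintro ⟨A, C⟩ h
    simp only [Finset.coe_sigma, Set.mem_sigma_iff, Finset.mem_coe, mem_zsub] at h ⊢
    obtain ⟨⟨⟨hA, hAc⟩, hA1, hA2⟩, ⟨hC, hCc⟩, hC1, hC2⟩ := h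
    have hdis : Disjoint A C := (Finset.disjoint_of_subset_left hC Finset.sdiff_disjoint).symm
    refine ⟨⟨⟨Finset.union_subset hA (hC.trans Finset.sdiff_subset), ?_⟩, ?_, ?_⟩,
      ⟨Finset.subset_union_right, hCc⟩, hC1, hC2⟩
    · rw [Finset.card_union_of_disjoint hdis]; omega
    · rw [Finset.sum_union hdis, hA1, hC1, add_zero]
    · rw [Finset.sum_union hdis, hA2, hC2, add_zero]
  · rintro ⟨D, C⟩ h
    simp only [Finset.coe_sigma, Set.mem_sigma_iff, Finset.mem_coe, mem_zsub] at h ⊢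
    obtain ⟨⟨⟨hD, hDc⟩, hD1, hD2⟩, ⟨hC, hCc⟩, hC1, hC2⟩ := h
    refine ⟨⟨⟨Finset.sdiff_subset.trans hD, ?_⟩, sum_sdiff_zero hC hC1 hD1,
      sum_sdiff_zero hC hC2 hD2⟩, ⟨?_, hCc⟩, hC1, hC2⟩
    · rw [Finset.card_sdiff_of_subset hC]; omega
    · intro x hx
      simp only [Finset.mem_sdiff]
      exact ⟨hD (hC hx), fun h => h.2 hx⟩
  · rintro ⟨A, C⟩ h
    simp only [Finset.coe_sigma, Set.mem_sigma_iff, Finset.mem_coe, mem_zsub] at h ⊢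
    obtain ⟨_, ⟨hC, hCc⟩, hC1, hC2⟩ := h
    have hdis : Disjoint A C := (Finset.disjoint_of_subset_left hC Finset.sdiff_disjoint).symm
    rw [Finset.union_sdiff_cancel_right hdis]
  · rintro ⟨D, C⟩ h
    simp only [Finset.coe_sigma, Set.mem_sigma_iff, Finset.mem_coe, mem_zsub] at h ⊢
    obtain ⟨_, ⟨hC, hCc⟩, hC1, hC2⟩ := h
    rw [Finset.sdiff_union_of_subset hC]

lemma L6 (hp2 : p ≠ 2) {u v : ι → ZMod p} {X : Finset ι} (hX : X.card = 4 * p - 3)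
    (h : (zsub u v X p).card = 0) :
    ((zsub u v X (p - 1)).card : ZMod p) = ((zsub u v X (3 * p - 1)).card : ZMod p) := by
  have hp := (Fact.out : p.Prime).two_le
  have h1 := congrArg (Nat.cast (R := ZMod p)) (L6a u v X)
  push_cast at h1
  have key : ∀ J ⊆ X, 3 * p - 2 ≤ J.card → J.card < 3 * p →
      ((zsub u v J (2 * p)).card : ZMod p) = -1 := by
    intro J hJ a b
    have := L2 hp2 u v a b
    rw [zsub_p_mono h hJ] at this
    push_cast at this
    linear_combination this
  rw [Finset.sum_congr rfl (g := fun _ => (-1 : ZMod p)),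
    Finset.sum_congr (s₁ := zsub u v X (3 * p - 1)) rfl (g := fun _ => (-1 : ZMod p))] at h1
  · simpa using h1
  · intro D hD
    have := (mem_zsub.1 hD).1
    exact key D this.1 (by omega) (by omega)
  · intro A hA
    have := (mem_zsub.1 hA).1
    have hc := Finset.card_sdiff_of_subset this.1
    exact key _ Finset.sdiff_subset (by omega) (by omega)

/-- Reiher's theorem (Kemnitz conjecture) for primes. -/
lemma kemnitz (u v : ι → ZMod p) {X : Finset ι} (hX : 4 * p - 3 ≤ X.card) :
    ∃ I ⊆ X, I.card = p ∧ ∑ i ∈ I, u i = 0 ∧ ∑ i ∈ I, v i = 0 := by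
  have hp := (Fact.out : p.Prime).two_le
  obtain ⟨Y, hYX, hY⟩ := Finset.exists_subset_card_eq hX
  suffices h : (zsub u v Y p).card ≠ 0 by
    obtain ⟨I, hI⟩ := Finset.card_ne_zero.1 h
    rw [mem_zsub] at hI
    exact ⟨I, hI.1.1.trans hYX, hI.1.2, hI.2⟩
  intro h0
  by_cases hp2 : p = 2
  · subst hp2
    obtain ⟨a, ha, b, hb, hab, he⟩ := Finset.exists_ne_map_eq_of_card_lt_of_maps_to
      (s := Y) (t := (Finset.univ : Finset (ZMod 2 × ZMod 2))) (f := fun i => (u i, v i))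
      (by rw [hY]; decide) (fun _ _ => by simp)
    rw [Prod.mk.injEq] at he
    rw [Finset.card_eq_zero, Finset.eq_empty_iff_forall_notMem] at h0
    refine h0 {a, b} (mem_zsub.2 ⟨⟨?_, Finset.card_pair hab⟩, ?_, ?_⟩)
    · intro x hx
      simp only [Finset.mem_insert, Finset.mem_singleton] at hx
      rcases hx with rfl | rfl <;> assumption
    · rw [Finset.sum_pair hab, he.1]; exact CharTwo.add_self_eq_zero _
    · rw [Finset.sum_pair hab, he.2]; exact CharTwo.add_self_eq_zero _
  · have a := L3a hp2 u v hY
    have b := L3b hp2 u v hY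
    have c := L4 hp2 u v hY
    have d := L6 hp2 hY h0
    rw [L5 hp2 h0, h0] at a c
    push_cast at a c
    have e : (2 : ZMod p) = 0 := by linear_combination 2 * a - b - c + d
    have e' : ((2 : ℕ) : ZMod p) = 0 := by exact_mod_cast e
    rw [ZMod.natCast_eq_zero_iff] at e'
    have := Nat.le_of_dvd (by omega) e'
    omega

end Prime

section Descent

/-- Block extraction. -/
lemma extract_blocks {ι V : Type*} [DecidableEq ι] [AddCommMonoid V] {p e : ℕ} (hp : 0 < p)
    (f : ι → V)
    (hE : ∀ X : Finset ι, e ≤ X.card → ∃ I ⊆ X, I.card = p ∧ ∑ i ∈ I, f i = 0)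
    (t D : ℕ) (he : e ≤ D + p) (X : Finset ι) (hX : X.card = p * t + D) :
    ∃ (Bs : Finset (Finset ι)) (R : Finset ι), Bs.card = t ∧ R.card = D ∧ R ⊆ X ∧
      (∀ B ∈ Bs, B ⊆ X ∧ B.card = p ∧ ∑ i ∈ B, f i = 0 ∧ Disjoint B R) ∧
      (∀ B ∈ Bs, ∀ C ∈ Bs, B ≠ C → Disjoint B C) := by
  induction t generalizing X with
  | zero => exact ⟨∅, X, by simp, by simpa using hX, subset_rfl, by simp, by simp⟩
  | succ t ih =>
    obtain ⟨I, hIX, hIc, hI0⟩ := hE X (by rw [hX, Nat.mul_succ]; omega)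
    have hc : (X \ I).card = p * t + D := by
      rw [Finset.card_sdiff_of_subset hIX, hX, hIc, Nat.mul_succ]; omega
    obtain ⟨Bs, R, h1, h2, h3, h4, h5⟩ := ih (X \ I) hc
    have hdis : ∀ Y ⊆ X \ I, Disjoint I Y := fun Y hY =>
      (Finset.disjoint_of_subset_left hY Finset.sdiff_disjoint).symm
    have hnot : I ∉ Bs := by
      intro hI
      have h6 := hdis I (h4 I hI).1
      rw [Finset.disjoint_self_iff_empty] at h6
      rw [h6] at hIc
      simp at hIc
      omega
    refine ⟨insert I Bs, R, by rw [Finset.card_insert_of_notMem hnot, h1], h2,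
      h3.trans Finset.sdiff_subset, ?_, ?_⟩
    · intro B hB
      rcases Finset.mem_insert.1 hB with rfl | hB
      · exact ⟨hIX, hIc, hI0, hdis R h3⟩
      · obtain ⟨a, b, c, d⟩ := h4 B hB
        exact ⟨a.trans Finset.sdiff_subset, b, c, d⟩
    · intro B hB C hC hBC
      rcases Finset.mem_insert.1 hB with hB' | hB' <;> rcases Finset.mem_insert.1 hC with hC' | hC'
      · exact absurd (hB'.trans hC'.symm) hBC
      · rw [hB']; exact hdis C (h4 C hC').1
      · rw [hC']; exact (hdis B (h4 B hB').1).symm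
      · exact h5 B hB' C hC' hBC

lemma descent {ι V : Type*} [DecidableEq ι] [AddCommMonoid V] {p e : ℕ} (hp : 0 < p)
    (f : ι → V) (w : ι → ℕ)
    (hE : ∀ X : Finset ι, e ≤ X.card → ∃ I ⊆ X, I.card = p ∧ ∑ i ∈ I, f i = 0)
    (t D : ℕ) (he : e ≤ D + p)
    (hD : ∀ X : Finset ι, D + 1 ≤ X.card →
      ∃ I ⊆ X, I.Nonempty ∧ ∑ i ∈ I, f i = 0 ∧ p ∣ ∑ i ∈ I, w i)
    (J : Finset ι) (hJ : J.card = p * t + (D + 1)) (i0 : ι) (hi0 : i0 ∈ J)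
    (hw : ∀ i ∈ J, i ≠ i0 → w i = 1) :
    ∃ (Bs : Finset (Finset ι)) (B0 : Finset ι), Bs.card = t + 1 ∧ B0 ∈ Bs ∧
      (∀ B ∈ Bs, B ⊆ J ∧ B.Nonempty ∧ ∑ i ∈ B, f i = 0 ∧ p ∣ ∑ i ∈ B, w i) ∧
      (∀ B ∈ Bs, B ≠ B0 → ∑ i ∈ B, w i = p) ∧
      (∀ B ∈ Bs, ∀ C ∈ Bs, B ≠ C → Disjoint B C) := by
  obtain ⟨Bs, R, h1, h2, h3, h4, h5⟩ := extract_blocks hp f hE t D he (J.erase i0)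
    (by rw [Finset.card_erase_of_mem hi0, hJ]; omega)
  have hR : i0 ∉ R := fun h => by simpa using h3 h
  obtain ⟨B0, hB0, hne, hf0, hw0⟩ := hD (insert i0 R)
    (by rw [Finset.card_insert_of_notMem hR, h2])
  have hsub : insert i0 R ⊆ J :=
    Finset.insert_subset hi0 (h3.trans (Finset.erase_subset _ _))
  have hdis : ∀ B ∈ Bs, Disjoint B B0 := by
    intro B hB
    refine Finset.disjoint_of_subset_right hB0 ?_
    rw [Finset.disjoint_insert_right]
    exact ⟨fun h => by simpa using (h4 B hB).1 h, (h4 B hB).2.2.2⟩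
  have hnot : B0 ∉ Bs := by
    intro h
    have := hdis B0 h
    rw [Finset.disjoint_self_iff_empty] at this
    exact hne.ne_empty this
  have hwB : ∀ B ∈ Bs, ∑ i ∈ B, w i = p := by
    intro B hB
    rw [Finset.sum_congr rfl (g := fun _ => 1), Finset.sum_const, smul_eq_mul, mul_one,
      (h4 B hB).2.1]
    intro i hi
    have := Finset.mem_erase.1 ((h4 B hB).1 hi)
    exact hw i this.2 this.1
  refine ⟨insert B0 Bs, B0, by rw [Finset.card_insert_of_notMem hnot, h1], by simp, ?_, ?_, ?_⟩
  · intro B hB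
    rcases Finset.mem_insert.1 hB with rfl | hB
    · exact ⟨hB0.trans hsub, hne, hf0, hw0⟩
    · obtain ⟨a, b, c, d⟩ := h4 B hB
      exact ⟨a.trans (Finset.erase_subset _ _), Finset.card_pos.1 (by omega), c, by rw [hwB B hB]⟩
  · intro B hB hne
    rcases Finset.mem_insert.1 hB with rfl | hB
    · exact absurd rfl hne
    · exact hwB B hB
  · intro B hB C hC hBC
    rcases Finset.mem_insert.1 hB with hB' | hB' <;> rcases Finset.mem_insert.1 hC with hC' | hC'
    · exact absurd (hB'.trans hC'.symm) hBC
    · rw [hB']; exact (hdis C hC').symm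
    · rw [hC']; exact hdis B hB'
    · exact h5 B hB' C hC' hBC

/-- The conclusion: an ordered nonempty product-one selection with weight divisible by `N`. -/
def Concl {ι G : Type*} [Group G] (N : ℕ) (J : Finset ι) (g : ι → G) (w : ι → ℕ) : Prop :=
  ∃ l : List ι, l ≠ [] ∧ l.Nodup ∧ (∀ i ∈ l, i ∈ J) ∧ (l.map g).prod = 1 ∧ N ∣ (l.map w).sum

lemma concl_lift {ι G : Type*} [DecidableEq ι] [Group G] {N p : ℕ} (J : Finset ι) (g : ι → G)
    (w : ι → ℕ) (Bs : Finset (Finset ι))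
    (h1 : ∀ B ∈ Bs, B ⊆ J ∧ B.Nonempty ∧ p ∣ ∑ i ∈ B, w i)
    (h2 : ∀ B ∈ Bs, ∀ C ∈ Bs, B ≠ C → Disjoint B C)
    (h : Concl N Bs (fun B => (B.toList.map g).prod) (fun B => (∑ i ∈ B, w i) / p)) :
    Concl (p * N) J g w := by
  obtain ⟨l, hl, hnd, hmem, hprod, hsum⟩ := h
  refine ⟨l.flatMap Finset.toList, ?_, ?_, ?_, ?_, ?_⟩
  · obtain ⟨B, hB⟩ := List.exists_mem_of_ne_nil l hl
    obtain ⟨i, hi⟩ := (h1 B (hmem B hB)).2.1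
    exact List.ne_nil_of_mem (List.mem_flatMap.2 ⟨B, hB, Finset.mem_toList.2 hi⟩)
  · rw [List.nodup_flatMap]
    refine ⟨fun B _ => B.nodup_toList, ?_⟩
    refine List.Pairwise.imp_of_mem ?_ hnd
    intro B C hB hC hne
    have := h2 B (hmem B hB) C (hmem C hC) hne
    intro x hx hx'
    rw [Finset.mem_toList] at hx hx'
    exact Finset.disjoint_left.1 this hx hx'
  · intro i hi
    obtain ⟨B, hB, hiB⟩ := List.mem_flatMap.1 hi
    exact (h1 B (hmem B hB)).1 (Finset.mem_toList.1 hiB)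
  · rw [← hprod]
    clear hl hnd hmem hprod hsum
    induction l with
    | nil => simp
    | cons B l ih => simp [List.flatMap_cons, ih]
  · obtain ⟨c, hc⟩ := hsum
    refine ⟨c, ?_⟩
    rw [mul_assoc, ← hc]
    clear hl hnd hprod hc
    induction l with
    | nil => simp
    | cons B l ih =>
      have hB := (h1 B (hmem B (by simp))).2.2
      rw [List.flatMap_cons, List.map_append, List.sum_append,
        ih (fun C hC => hmem C (by simp [hC])), List.map_cons, List.sum_cons, mul_add,
        Nat.mul_div_cancel' hB, Finset.sum_map_toList]

/-- An abstract (sub)group of `C_m ⋉ C_{mn}` with coordinates `α`, `β`. -/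
structure Sys {G : Type*} [Group G] (m n : ℕ) (H : Submonoid G) (α β : G → ℕ) (s : ℕ) : Prop where
  hα : ∀ g ∈ H, ∀ h ∈ H, α (g * h) ≡ α g + α h [MOD m]
  hβ : ∀ g ∈ H, ∀ h ∈ H, β (g * h) ≡ β g + s ^ α g * β h [MOD m * n]
  hs : s ^ m ≡ 1 [MOD m * n]
  hinj : ∀ g ∈ H, m ∣ α g → m * n ∣ β g → g = 1

lemma zero_of_hom {G V : Type*} [Group G] [AddCommGroup V] {H : Submonoid G} {f : G → V}
    (hf : ∀ g ∈ H, ∀ h ∈ H, f (g * h) = f g + f h) : f 1 = 0 := by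
  have := hf 1 H.one_mem 1 H.one_mem
  rw [mul_one] at this
  simpa using this

/-- kernel of a homomorphism on `H` -/
def kerSub {G V : Type*} [Group G] [AddCommGroup V] (H : Submonoid G) (f : G → V)
    (hf : ∀ g ∈ H, ∀ h ∈ H, f (g * h) = f g + f h) : Submonoid G where
  carrier := {g | g ∈ H ∧ f g = 0}
  one_mem' := ⟨H.one_mem, zero_of_hom hf⟩
  mul_mem' := by
    rintro a b ⟨ha, ha'⟩ ⟨hb, hb'⟩
    exact ⟨H.mul_mem ha hb, by rw [hf a ha b hb, ha', hb', add_zero]⟩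

lemma prod_mem_ker {ι G V : Type*} [Group G] [AddCommGroup V] (H : Submonoid G) (f : G → V)
    (hf : ∀ g ∈ H, ∀ h ∈ H, f (g * h) = f g + f h) (g : ι → G) (B : Finset ι)
    (hB : ∀ i ∈ B, g i ∈ H) (h0 : ∑ i ∈ B, f (g i) = 0) :
    (B.toList.map g).prod ∈ kerSub H f hf := by
  have key : ∀ l : List ι, (∀ i ∈ l, g i ∈ H) →
      (l.map g).prod ∈ H ∧ f (l.map g).prod = (l.map (fun i => f (g i))).sum := by
    intro l
    induction l with
    | nil => intro _; simpa using zero_of_hom hf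
    | cons i l ih =>
      intro hl
      obtain ⟨a, b⟩ := ih (fun j hj => hl j (by simp [hj]))
      have hi := hl i (by simp)
      rw [List.map_cons, List.prod_cons, List.map_cons, List.sum_cons]
      exact ⟨H.mul_mem hi a, by rw [hf _ hi _ a, b]⟩
  obtain ⟨a, b⟩ := key B.toList (fun i hi => hB i (Finset.mem_toList.1 hi))
  refine ⟨a, ?_⟩
  rw [b, Finset.sum_map_toList, h0]

/-- One step of the induction. -/
lemma step {ι G V : Type*} [DecidableEq ι] [Group G] [AddCommGroup V] {p e t D N : ℕ} (hp : 0 < p)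
    (H : Submonoid G) (f : G → V)
    (hf : ∀ g ∈ H, ∀ h ∈ H, f (g * h) = f g + f h)
    (hE : ∀ (f : ι → V) (X : Finset ι), e ≤ X.card → ∃ I ⊆ X, I.card = p ∧ ∑ i ∈ I, f i = 0)
    (he : e ≤ D + p)
    (hD : ∀ (f : ι → V) (w : ι → ℕ) (X : Finset ι), D + 1 ≤ X.card →
      ∃ I ⊆ X, I.Nonempty ∧ ∑ i ∈ I, f i = 0 ∧ p ∣ ∑ i ∈ I, w i)
    (g : ι → G) (w : ι → ℕ)
    (J : Finset ι) (hJ : J.card = p * t + (D + 1)) (i0 : ι) (hi0 : i0 ∈ J)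
    (hw : ∀ i ∈ J, i ≠ i0 → w i = 1) (hg : ∀ i ∈ J, g i ∈ H)
    (ih : ∀ (g' : Finset ι → G) (w' : Finset ι → ℕ) (J' : Finset (Finset ι)), J'.card = t + 1 →
      ∀ B0 ∈ J', (∀ B ∈ J', B ≠ B0 → w' B = 1) → (∀ B ∈ J', g' B ∈ kerSub H f hf) →
      Concl N J' g' w') : Concl (p * N) J g w := by
  obtain ⟨Bs, B0, h1, h2, h3, h4, h5⟩ := descent hp (fun i => f (g i)) w (hE _) t D he (hD _ w)
    J hJ i0 hi0 hw
  refine concl_lift J g w Bs (fun B hB => ⟨(h3 B hB).1, (h3 B hB).2.1, (h3 B hB).2.2.2⟩) h5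
    (ih _ _ Bs h1 B0 h2 ?_ ?_)
  · intro B hB hne
    show (∑ i ∈ B, w i) / p = 1
    rw [h4 B hB hne, Nat.div_self hp]
  · intro B hB
    exact prod_mem_ker H f hf g B (fun i hi => hg i ((h3 B hB).1 hi)) (h3 B hB).2.2.1

lemma egz {ι : Type*} {p : ℕ} [NeZero p] (f : ι → ZMod p) (X : Finset ι)
    (h : 2 * p - 1 ≤ X.card) : ∃ I ⊆ X, I.card = p ∧ ∑ i ∈ I, f i = 0 := by
  obtain ⟨I, a, b, c⟩ := ZMod.erdos_ginzburg_ziv f h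
  exact ⟨I, a, b, c⟩

lemma pow_one_of_minFac {m s : ℕ} (hm : m ≠ 1) (hm0 : 0 < m)
    (h : s ^ m ≡ 1 [MOD m.minFac]) : s ≡ 1 [MOD m.minFac] := by
  have hp := Nat.minFac_prime hm
  have : Fact m.minFac.Prime := ⟨hp⟩
  rw [← ZMod.natCast_eq_natCast_iff] at h ⊢
  push_cast at h ⊢
  have hs0 : (s : ZMod m.minFac) ≠ 0 := by
    intro h0
    rw [h0, zero_pow (by omega)] at h
    exact zero_ne_one h
  have h2 := ZMod.pow_card_sub_one_eq_one hs0
  have h3 := orderOf_dvd_of_pow_eq_one h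
  have h4 := orderOf_dvd_of_pow_eq_one h2
  rw [← orderOf_eq_one_iff]
  by_contra hne
  have hq := Nat.minFac_prime hne
  have h5 := Nat.minFac_dvd (orderOf (s : ZMod m.minFac))
  have h6 := Nat.minFac_le_of_dvd hq.two_le (h5.trans h3)
  have h7 := Nat.le_of_dvd (by have := hp.two_le; omega) (h5.trans h4)
  have := hp.two_le
  omega

theorem main_induction (N : ℕ) : ∀ {ι G : Type u} [DecidableEq ι] [Group G] (m n : ℕ) (_ : m * n = N)
    (_ : 0 < m) (_ : 0 < n)
    (H : Submonoid G) (α β : G → ℕ) (s : ℕ) (_ : Sys m n H α β s)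
    (g : ι → G) (w : ι → ℕ) (J : Finset ι) (_ : J.card = m + 2 * (m * n) - 2)
    (i0 : ι) (_ : i0 ∈ J) (_ : ∀ i ∈ J, i ≠ i0 → w i = 1) (_ : ∀ i ∈ J, g i ∈ H),
    Concl (m * n) J g w := by
  induction N using Nat.strong_induction_on with
  | _ N IH =>
  intro ι G _ _ m n hN hm hn H α β s hS g w J hJ i0 hi0 hw hg
  by_cases hm1 : m = 1
  · subst hm1
    by_cases hn1 : n = 1
    · subst hn1
      refine ⟨[i0], by simp, by simp, by simpa using hi0, ?_, by simp⟩
      simpa using hS.hinj _ (hg i0 hi0) (one_dvd _) (by simp)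
    · obtain ⟨p, hp, n', rfl⟩ : ∃ p, p.Prime ∧ p ∣ n := ⟨_, Nat.minFac_prime hn1, Nat.minFac_dvd n⟩
      have : Fact p.Prime := ⟨hp⟩
      have hp2 := hp.two_le
      have hn' : 0 < n' := Nat.pos_of_mul_pos_left hn
      have hs : s ≡ 1 [MOD p * n'] := by simpa using hS.hs
      have hf : ∀ g ∈ H, ∀ h ∈ H, ((β (g * h) : ℕ) : ZMod p) = (β g : ZMod p) + (β h : ZMod p) := by
        intro a ha b hb
        have h1 := (ZMod.natCast_eq_natCast_iff _ _ _).2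
          ((hS.hβ a ha b hb).of_dvd (show p ∣ 1 * (p * n') from ⟨n', by ring⟩))
        have h2 := (ZMod.natCast_eq_natCast_iff _ _ _).2 (hs.of_dvd (Dvd.intro n' rfl))
        push_cast at h1 h2
        rw [h1, h2]; simp
      have hS' : Sys 1 n' (kerSub H (fun g => (β g : ZMod p)) hf) α (fun g => β g / p) s := by
        have hd : ∀ g ∈ kerSub H (fun g => (β g : ZMod p)) hf, p ∣ β g := fun g hg =>
          (ZMod.natCast_eq_zero_iff _ _).1 hg.2
        refine ⟨fun a ha b hb => hS.hα a ha.1 b hb.1, ?_, ?_, ?_⟩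
        · intro a ha b hb
          have h1 := hS.hβ a ha.1 b hb.1
          obtain ⟨x, hx⟩ := hd a ha
          obtain ⟨y, hy⟩ := hd b hb
          obtain ⟨z, hz⟩ := hd _ (Submonoid.mul_mem _ ha hb)
          rw [hx, hy, hz] at h1 ⊢
          simp only [Nat.mul_div_cancel_left _ hp.pos]
          refine Nat.ModEq.mul_left_cancel' hp.ne_zero ?_
          convert h1 using 1 <;> ring
        · simpa using hs.of_dvd (Dvd.intro_left p rfl)
        · intro a ha h1 h2
          refine hS.hinj a ha.1 h1 ?_
          obtain ⟨x, hx⟩ := hd a ha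
          rw [hx] at h2 ⊢
          rw [Nat.mul_div_cancel_left _ hp.pos] at h2
          rw [one_mul] at h2 ⊢
          exact Nat.mul_dvd_mul_left p h2
      have := step (e := 2 * p - 1) (t := 2 * n' - 2) (D := 2 * p - 2) (N := n') hp.pos H
        (fun g => (β g : ZMod p)) hf egz (by omega)
        (by
          intro f w X hX
          obtain ⟨I, h1, h2, h3, h4⟩ := dav2 f (fun i => (w i : ZMod p)) (J := X) (by omega)
          refine ⟨I, h1, h2, h3, ?_⟩
          rw [← ZMod.natCast_eq_zero_iff]; push_cast; exact h4)
        g w J (by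
          rw [hJ, Nat.mul_sub]
          have : p * 2 ≤ p * (2 * n') := Nat.mul_le_mul_left p (by omega)
          have h2 : p * (2 * n') = 2 * (1 * (p * n')) := by ring
          omega) i0 hi0 hw hg
        (by
          intro g' w' J' hJ' B0 hB0 hw' hg'
          have h2 : 1 * n' < N := by
            rw [← hN, one_mul, one_mul]
            exact lt_mul_left hn' (by omega)
          have := IH (1 * n') h2 1 n' rfl one_pos hn' _ _ _ _ hS' g' w' J' (by omega) B0 hB0 hw' hg'
          rwa [one_mul] at this)
      rwa [one_mul]
  · obtain ⟨p, hpdef⟩ : ∃ p, p = m.minFac := ⟨_, rfl⟩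
    have hp : p.Prime := hpdef ▸ Nat.minFac_prime hm1
    obtain ⟨m', hm'⟩ : p ∣ m := hpdef ▸ Nat.minFac_dvd m
    have : Fact p.Prime := ⟨hp⟩
    have hp2 := hp.two_le
    have hs : s ≡ 1 [MOD p] := by
      rw [hpdef]
      exact pow_one_of_minFac hm1 hm (hS.hs.of_dvd ((Nat.minFac_dvd m).mul_right n))
    subst hm'
    have hm'0 : 0 < m' := Nat.pos_of_mul_pos_left hm
    have hf : ∀ g ∈ H, ∀ h ∈ H, (((α (g * h) : ℕ) : ZMod p), ((β (g * h) : ℕ) : ZMod p))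
        = ((α g : ZMod p), (β g : ZMod p)) + ((α h : ZMod p), (β h : ZMod p)) := by
      intro a ha b hb
      have h1 := (ZMod.natCast_eq_natCast_iff _ _ _).2
        ((hS.hβ a ha b hb).of_dvd (show p ∣ p * m' * n from ⟨m' * n, by ring⟩))
      have h2 := (ZMod.natCast_eq_natCast_iff _ _ _).2 hs
      have h3 := (ZMod.natCast_eq_natCast_iff _ _ _).2
        ((hS.hα a ha b hb).of_dvd (show p ∣ p * m' from ⟨m', by ring⟩))
      push_cast at h1 h2 h3
      rw [h1, h2, h3]; simp
    have hS' : Sys m' n (kerSub H (fun g => ((α g : ZMod p), (β g : ZMod p))) hf)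
        (fun g => α g / p) (fun g => β g / p) (s ^ p) := by
      have hd : ∀ g ∈ kerSub H (fun g => ((α g : ZMod p), (β g : ZMod p))) hf,
          p ∣ α g ∧ p ∣ β g := fun g hg =>
        ⟨(ZMod.natCast_eq_zero_iff _ _).1 (congrArg Prod.fst hg.2),
         (ZMod.natCast_eq_zero_iff _ _).1 (congrArg Prod.snd hg.2)⟩
      refine ⟨?_, ?_, ?_, ?_⟩
      · intro a ha b hb
        have h1 := hS.hα a ha.1 b hb.1
        obtain ⟨x, hx⟩ := (hd a ha).1
        obtain ⟨y, hy⟩ := (hd b hb).1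
        obtain ⟨z, hz⟩ := (hd _ (Submonoid.mul_mem _ ha hb)).1
        rw [hx, hy, hz] at h1 ⊢
        simp only [Nat.mul_div_cancel_left _ hp.pos]
        refine Nat.ModEq.mul_left_cancel' hp.ne_zero ?_
        convert h1 using 1; ring
      · intro a ha b hb
        have h1 := hS.hβ a ha.1 b hb.1
        obtain ⟨x, hx⟩ := (hd a ha).2
        obtain ⟨y, hy⟩ := (hd b hb).2
        obtain ⟨z, hz⟩ := (hd _ (Submonoid.mul_mem _ ha hb)).2
        obtain ⟨k, hk⟩ := (hd a ha).1
        rw [hx, hy, hz, hk] at h1 ⊢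
        simp only [Nat.mul_div_cancel_left _ hp.pos]
        refine Nat.ModEq.mul_left_cancel' hp.ne_zero ?_
        convert h1 using 1 <;> ring
      · rw [← pow_mul]
        exact hS.hs.of_dvd ⟨p, by ring⟩
      · intro a ha h1 h2
        obtain ⟨x, hx⟩ := (hd a ha).2
        obtain ⟨k, hk⟩ := (hd a ha).1
        refine hS.hinj a ha.1 ?_ ?_
        · rw [hk, Nat.mul_div_cancel_left _ hp.pos] at h1
          rw [hk]
          exact Nat.mul_dvd_mul_left p h1
        · rw [hx, Nat.mul_div_cancel_left _ hp.pos] at h2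
          rw [hx, mul_assoc]
          exact Nat.mul_dvd_mul_left p h2
    have hmn : 1 ≤ m' * n := Nat.mul_pos hm'0 hn
    have := step (e := 4 * p - 3) (t := m' + 2 * (m' * n) - 3) (D := 3 * p - 3) (N := m' * n)
      hp.pos H (fun g => ((α g : ZMod p), (β g : ZMod p))) hf
      (by
        intro f X hX
        obtain ⟨I, h1, h2, h3, h4⟩ := kemnitz (fun i => (f i).1) (fun i => (f i).2) hX
        exact ⟨I, h1, h2, Prod.ext (by rw [Prod.fst_sum, h3]; rfl)
          (by rw [Prod.snd_sum, h4]; rfl)⟩) (by omega)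
      (by
        intro f w X hX
        obtain ⟨I, h1, h2, ⟨h3, h4⟩, h5⟩ := dav3 (fun i => (f i).1) (fun i => (f i).2)
          (fun i => (w i : ZMod p)) (J := X) (by omega)
        refine ⟨I, h1, h2, Prod.ext (by rw [Prod.fst_sum, h3]; rfl)
          (by rw [Prod.snd_sum, h4]; rfl), ?_⟩
        rw [← ZMod.natCast_eq_zero_iff]; push_cast; exact h5)
      g w J (by
        rw [hJ, Nat.mul_sub]
        have : p * 3 ≤ p * (m' + 2 * (m' * n)) := Nat.mul_le_mul_left p (by omega)
        have h2 : p * (m' + 2 * (m' * n)) = p * m' + 2 * (p * m' * n) := by ring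
        omega) i0 hi0 hw hg
      (by
        intro g' w' J' hJ' B0 hB0 hw' hg'
        have h2 : m' * n < N := by
          rw [← hN, mul_assoc]
          exact lt_mul_left hmn (by omega)
        exact IH (m' * n) h2 m' n rfl hm'0 hn _ _ _ _ hS' g' w' J' (by omega) B0 hB0 hw' hg')
    rwa [mul_assoc]

end Descent

section Final

lemma le_add_split {G : Type*} {T A B : Multiset G} (h : T ≤ A + B) :
    ∃ T1 T2, T1 ≤ A ∧ T2 ≤ B ∧ T = T1 + T2 := by
  classical
  refine ⟨T ∩ A, T - A, Multiset.inter_le_right, tsub_le_iff_left.2 h, ?_⟩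
  rw [add_comm, Multiset.sub_add_inter]

lemma aut_apply {N : ℕ} [NeZero N] (A : MulAut (Multiplicative (ZMod N))) (b : ZMod N) :
    Multiplicative.toAdd (A (Multiplicative.ofAdd b))
      = b * Multiplicative.toAdd (A (Multiplicative.ofAdd 1)) := by
  have h : Multiplicative.ofAdd b = (Multiplicative.ofAdd (1 : ZMod N)) ^ b.val := by
    rw [← ofAdd_nsmul]; simp
  rw [h, map_pow, toAdd_pow]
  simp

lemma phi_apply {m N : ℕ} [NeZero m] [NeZero N]
    (φ : Multiplicative (ZMod m) →* MulAut (Multiplicative (ZMod N))) (k : ℕ) (b : ZMod N) :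
    Multiplicative.toAdd ((φ (Multiplicative.ofAdd (1 : ZMod m) ^ k)) (Multiplicative.ofAdd b))
      = (Multiplicative.toAdd (φ (Multiplicative.ofAdd 1) (Multiplicative.ofAdd 1))) ^ k * b := by
  induction k generalizing b with
  | zero => simp
  | succ k ih =>
    rw [pow_succ, map_mul, MulAut.mul_apply]
    have h := aut_apply (φ (Multiplicative.ofAdd 1)) b
    rw [← ofAdd_toAdd ((φ (Multiplicative.ofAdd 1)) (Multiplicative.ofAdd b)), ih, h]
    ring

lemma sys_semidirect (m n : ℕ) [NeZero m] [NeZero (m * n)]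
    (φ : Multiplicative (ZMod m) →* MulAut (Multiplicative (ZMod (m * n)))) :
    Sys (G := Multiplicative (ZMod (m * n)) ⋊[φ] Multiplicative (ZMod m)) m n ⊤
      (fun g => (Multiplicative.toAdd g.right).val) (fun g => (Multiplicative.toAdd g.left).val)
      (Multiplicative.toAdd (φ (Multiplicative.ofAdd 1) (Multiplicative.ofAdd 1))).val := by
  refine ⟨?_, ?_, ?_, ?_⟩
  · intro g _ h _
    rw [← ZMod.natCast_eq_natCast_iff]
    simp
  · intro g _ h _
    rw [← ZMod.natCast_eq_natCast_iff]
    have h1 : g.right = Multiplicative.ofAdd (1 : ZMod m) ^ (Multiplicative.toAdd g.right).val := by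
      rw [← ofAdd_nsmul]; simp
    have h2 := phi_apply φ (Multiplicative.toAdd g.right).val (Multiplicative.toAdd h.left)
    rw [← h1, ofAdd_toAdd] at h2
    push_cast
    simp only [ZMod.natCast_val, ZMod.cast_id', id_eq, SemidirectProduct.mul_left, toAdd_mul]
    rw [h2]
  · rw [← ZMod.natCast_eq_natCast_iff]
    have h2 := phi_apply φ m 1
    have h1 : Multiplicative.ofAdd (1 : ZMod m) ^ m = 1 := by
      rw [← ofAdd_nsmul]; simp
    rw [h1] at h2
    push_cast
    simpa using h2.symm
  · intro g _ h1 h2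
    have h3 := Nat.eq_zero_of_dvd_of_lt h1 (ZMod.val_lt _)
    have h4 := Nat.eq_zero_of_dvd_of_lt h2 (ZMod.val_lt _)
    rw [ZMod.val_eq_zero] at h3 h4
    exact SemidirectProduct.ext (toAdd_eq_zero.1 h4) (toAdd_eq_zero.1 h3)

end Final

/-- For `G ≅ C_m ⋉_φ C_{mn}`, `s_{mnℕ}(G) = m + 2mn − 2`: it is the least `l`
such that every sequence over `G` of length `≥ l` contains a nonempty
product-one subsequence of length divisible by `mn`. -/
theorem s_mnN_eq (m n : ℕ) (hm : 0 < m) (hn : 0 < n)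
    (φ : Multiplicative (ZMod m) →* MulAut (Multiplicative (ZMod (m * n)))) :
    IsLeast {l : ℕ |
        ∀ S : Multiset (Multiplicative (ZMod (m * n)) ⋊[φ] Multiplicative (ZMod m)),
          l ≤ Multiset.card S →
          ∃ T ≤ S, T ≠ 0 ∧ m * n ∣ Multiset.card T ∧ IsProductOne T}
      (m + 2 * (m * n) - 2) := by
  classical
  have hmn : 0 < m * n := Nat.mul_pos hm hn
  have : NeZero m := ⟨hm.ne'⟩
  have : NeZero (m * n) := ⟨hmn.ne'⟩
  constructor
  · intro S hS
    obtain ⟨L, rfl⟩ : ∃ L : List _, S = (L : Multiset _) := ⟨S.toList, by simp⟩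
    rw [Multiset.coe_card] at hS
    obtain ⟨J, -, hJ⟩ := Finset.exists_subset_card_eq (s := (Finset.univ : Finset (Fin L.length)))
      (n := m + 2 * (m * n) - 2) (by simpa using hS)
    obtain ⟨i0, hi0⟩ := Finset.card_pos.1 (show 0 < J.card by omega)
    obtain ⟨l, hl, hnd, -, hprod, hdvd⟩ := main_induction (m * n) m n rfl hm hn _ _ _ _
      (sys_semidirect m n φ) L.get (fun _ => 1) J hJ i0 hi0 (fun _ _ _ => rfl) (fun _ _ => trivial)
    refine ⟨((l.map L.get : List _) : Multiset _), ?_, ?_, ?_, l.map L.get, rfl, hprod⟩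
    · have h1 : (l : Multiset (Fin L.length)) ≤ (Finset.univ : Finset (Fin L.length)).val :=
        (Multiset.le_iff_subset (Multiset.coe_nodup.2 hnd)).2 (fun x _ => by simp)
      have h2 := Multiset.map_le_map (f := L.get) h1
      rw [Multiset.map_coe] at h2
      refine h2.trans (le_of_eq ?_)
      rw [Fin.univ_def]
      simp
    · simpa using hl
    · simpa using hdvd
  · intro k hk
    by_contra hlt
    obtain ⟨T, hTS, hT0, hdvd, l, hlT, hl⟩ := hk
      (Multiset.replicate (m - 1) (SemidirectProduct.inr (Multiplicative.ofAdd 1))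
        + (Multiset.replicate (m * n - 1) (SemidirectProduct.inl (Multiplicative.ofAdd 1))
          + Multiset.replicate (m * n - 1) 1)) (by
            simp only [Multiset.card_add, Multiset.card_replicate]; omega)
    obtain ⟨a, b, c, ha, hb, hc, rfl⟩ : ∃ a b c, a ≤ m - 1 ∧ b ≤ m * n - 1 ∧ c ≤ m * n - 1 ∧
        T = Multiset.replicate a (SemidirectProduct.inr (Multiplicative.ofAdd 1))
        + (Multiset.replicate b (SemidirectProduct.inl (Multiplicative.ofAdd 1))
          + Multiset.replicate c 1) := by
      obtain ⟨T1, T', h1, h', rfl⟩ := le_add_split hTS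
      obtain ⟨T2, T3, h2, h3, rfl⟩ := le_add_split h'
      obtain ⟨a, ha, rfl⟩ := Multiset.le_replicate_iff.1 h1
      obtain ⟨b, hb, rfl⟩ := Multiset.le_replicate_iff.1 h2
      obtain ⟨c, hc, rfl⟩ := Multiset.le_replicate_iff.1 h3
      exact ⟨a, b, c, ha, hb, hc, rfl⟩
    have ha0 : a = 0 := by
      have h1 := congrArg SemidirectProduct.rightHom hl
      rw [map_list_prod, map_one, ← Multiset.prod_coe, ← Multiset.map_coe, hlT] at h1
      simp only [Multiset.map_add, Multiset.map_replicate, Multiset.prod_add,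
        Multiset.prod_replicate, SemidirectProduct.rightHom_inr, SemidirectProduct.rightHom_inl,
        map_one, one_pow, mul_one] at h1
      rw [← ofAdd_nsmul, ofAdd_eq_one, nsmul_one, ZMod.natCast_eq_zero_iff] at h1
      exact Nat.eq_zero_of_dvd_of_lt h1 (by omega)
    subst ha0
    have hb0 : b = 0 := by
      have hperm : List.Perm (List.replicate b
          (SemidirectProduct.inl (φ := φ) (Multiplicative.ofAdd 1)) ++ List.replicate c 1) l := by
        rw [← Multiset.coe_eq_coe, hlT]
        rw [← Multiset.coe_add, Multiset.coe_replicate, Multiset.coe_replicate,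
          Multiset.replicate_zero, zero_add]
      have h1 := hperm.prod_eq' (by
        refine List.pairwise_of_forall_mem_list ?_
        intro x hx y hy
        simp only [List.mem_append, List.mem_replicate] at hx hy
        rcases hx with ⟨_, rfl⟩ | ⟨_, rfl⟩ <;> rcases hy with ⟨_, rfl⟩ | ⟨_, rfl⟩ <;> simp)
      rw [hl] at h1
      simp only [List.prod_append, List.prod_replicate, one_pow, mul_one] at h1
      rw [← map_pow, ← map_one SemidirectProduct.inl, SemidirectProduct.inl_inj,
        ← ofAdd_nsmul, ofAdd_eq_one, nsmul_one, ZMod.natCast_eq_zero_iff] at h1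
      exact Nat.eq_zero_of_dvd_of_lt h1 (by omega)
    subst hb0
    have hc0 : c = 0 := by
      simp only [Multiset.card_add, Multiset.card_replicate, zero_add] at hdvd
      exact Nat.eq_zero_of_dvd_of_lt hdvd (by omega)
    subst hc0
    simp at hT0
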